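/- There exist constants ε₀, ν₀ ∈ (0,1) and C > 0, independent of ν, k, λ and ε, such that for every 0 < ν ≤ ν₀, every 0 ≤ ε ≤ ε₀, every k = (k₁,k₃) ∈ ℤ² with |k₁| ≥ 1, every λ of the form λ = λ_r − i ε ν^{1/2}|k₁|^{−1/2} with λ_r ∈ ℝ, every F ∈ L²(I), and every solution w ∈ H²(I) of the Orr–Sommerfeld problem with Navier-slip boundary conditions and right-hand side F, one has ν^{2/3}|k₁|^{1/3}( |λ−1|^{1/2} + |ν/k₁|^{1/4} )^{1/3} ‖(∂_y,|k|)w‖_{L²} + ν^{1/3}|k₁|^{2/3}( |λ−1|^{1/2} + |ν/k₁|^{1/4} )^{2/3} ‖w‖_{L²} ≤ C ‖F‖_{L²}, where |λ−1| denotes the modulus of the complex number λ−1. -/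

import Mathlib

open Real MeasureTheory

noncomputable section

/-- `|k| = sqrt (k₁² + k₃²)` for `k = (k₁,k₃) ∈ ℤ²`. -/
def kabs (k₁ k₃ : ℤ) : ℝ := Real.sqrt ((k₁ : ℝ) ^ 2 + (k₃ : ℝ) ^ 2)

/-- The `L²` norm on the interval `(-1,1)`. -/
def l2 (f : ℝ → ℂ) : ℝ := Real.sqrt (∫ y in (-1:ℝ)..1, ‖f y‖ ^ 2)

/-- `‖(∂_y,|k|)f‖_{L²} = (‖f'‖² + |k|²‖f‖²)^{1/2}`. -/
def hk (k₁ k₃ : ℤ) (f : ℝ → ℂ) : ℝ :=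
  Real.sqrt ((∫ y in (-1:ℝ)..1, ‖deriv f y‖ ^ 2) +
    (kabs k₁ k₃) ^ 2 * ∫ y in (-1:ℝ)..1, ‖f y‖ ^ 2)

/-- The Orr–Sommerfeld problem with Navier-slip boundary conditions and a
(possibly complex) spectral parameter `λ`:
`-ν(∂_y² - |k|²)w + ik₁[(1-y²-λ)w + 2φ] = F` on `[-1,1]`, where
`(∂_y² - |k|²)φ = w`, `φ(±1) = φ''(±1) = 0`. -/
def OSslip (ν : ℝ) (k₁ k₃ : ℤ) (lam : ℂ) (w φ F : ℝ → ℂ) : Prop :=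
  ContDiff ℝ 2 w ∧ ContDiff ℝ 2 φ ∧
  (∀ y ∈ Set.Icc (-1:ℝ) 1,
    -(ν : ℂ) * (deriv (deriv w) y - ((kabs k₁ k₃ : ℝ) : ℂ) ^ 2 * w y) +
      Complex.I * (k₁ : ℂ) * ((1 - (y : ℂ) ^ 2 - lam) * w y + 2 * φ y) = F y) ∧
  (∀ y ∈ Set.Icc (-1:ℝ) 1,
    deriv (deriv φ) y - ((kabs k₁ k₃ : ℝ) : ℂ) ^ 2 * φ y = w y) ∧
  φ (-1) = 0 ∧ φ 1 = 0 ∧ deriv (deriv φ) (-1) = 0 ∧ deriv (deriv φ) 1 = 0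



def II (g : ℝ → ℝ) : ℝ := ∫ y in (-1:ℝ)..1, g y

lemma II_add {f g : ℝ → ℝ} (hf : Continuous f) (hg : Continuous g) :
    II (fun y => f y + g y) = II f + II g :=
  intervalIntegral.integral_add (hf.intervalIntegrable _ _) (hg.intervalIntegrable _ _)

lemma II_smul (c : ℝ) (f : ℝ → ℝ) : II (fun y => c * f y) = c * II f :=
  intervalIntegral.integral_const_mul _ _

lemma II_nonneg {f : ℝ → ℝ} (h : ∀ y, 0 ≤ f y) : 0 ≤ II f :=
  intervalIntegral.integral_nonneg (by norm_num) (fun y _ => h y)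

lemma II_mono {f g : ℝ → ℝ} (hf : Continuous f) (hg : Continuous g)
    (h : ∀ y ∈ Set.Icc (-1:ℝ) 1, f y ≤ g y) : II f ≤ II g :=
  intervalIntegral.integral_mono_on (by norm_num) (hf.intervalIntegrable _ _)
    (hg.intervalIntegrable _ _) h

lemma II_key {T S G G' : ℝ → ℝ} (hT : Continuous T) (hS : Continuous S)
    (hG : ∀ y, HasDerivAt G (G' y) y) (hG' : Continuous G') (hb : G 1 = G (-1))
    (h : ∀ y ∈ Set.Icc (-1:ℝ) 1, T y ≤ S y + G' y) : II T ≤ II S := by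
  have h1 := II_mono hT (hS.add hG') h
  have h2 : II (fun y => S y + G' y) = II S + II G' := II_add hS hG'
  have h3 : II G' = G 1 - G (-1) :=
    intervalIntegral.integral_eq_sub_of_hasDerivAt (fun y _ => hG y) (hG'.intervalIntegrable _ _)
  have h4 : II T ≤ II (fun y => S y + G' y) := h1
  linarith

def LL (u v : ℝ → ℝ) : ℝ := √(II (fun y => u y ^ 2 + v y ^ 2))

lemma LL_nonneg (u v : ℝ → ℝ) : 0 ≤ LL u v := Real.sqrt_nonneg _

lemma LL_sq (u v : ℝ → ℝ) : LL u v ^ 2 = II (fun y => u y ^ 2 + v y ^ 2) :=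
  Real.sq_sqrt (II_nonneg fun y => by positivity)

lemma LL_cs {u v a b : ℝ → ℝ} (hu : Continuous u) (hv : Continuous v)
    (ha : Continuous a) (hb : Continuous b) :
    II (fun y => u y * a y + v y * b y) ≤ LL u v * LL a b := by
  set X := II (fun y => u y * a y + v y * b y) with hX
  have hq : ∀ t : ℝ, 0 ≤ LL u v ^ 2 * (t * t) + (2 * X) * t + LL a b ^ 2 := by
    intro t
    have h0 : 0 ≤ II (fun y => (t * u y + a y) ^ 2 + (t * v y + b y) ^ 2) :=
      II_nonneg fun y => by positivity
    have e : II (fun y => (t * u y + a y) ^ 2 + (t * v y + b y) ^ 2)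
        = II (fun y => ((t*t) * (u y ^ 2 + v y ^ 2) + (2 * t) * (u y * a y + v y * b y))
          + (a y ^ 2 + b y ^ 2)) := by
      congr 1; funext y; ring
    rw [e, II_add (by fun_prop) (by fun_prop), II_add (by fun_prop) (by fun_prop), II_smul,
      II_smul, ← LL_sq, ← LL_sq] at h0
    linarith
  have := discrim_le_zero hq
  rw [discrim] at this
  have h2 : X ^ 2 ≤ (LL u v * LL a b) ^ 2 := by nlinarith
  exact (abs_le_of_sq_le_sq' h2 (mul_nonneg (LL_nonneg _ _) (LL_nonneg _ _))).2

lemma LL_cs' {u v a b : ℝ → ℝ} (hu : Continuous u) (hv : Continuous v)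
    (ha : Continuous a) (hb : Continuous b) :
    II (fun y => -(u y * a y + v y * b y)) ≤ LL u v * LL a b := by
  have := LL_cs hu.neg hv.neg ha hb
  have e : LL (-u) (-v) = LL u v := by simp [LL]
  rw [e] at this
  refine le_trans (le_of_eq ?_) this
  congr 1; funext y; simp; ring

set_option maxHeartbeats 2000000 in
lemma core_ineq {n s α β : ℝ} (hn : 0 < n) (hs : s ^ 2 = 1) (hα : 1 ≤ α)
    {p p1 p2 q q1 q2 a a1 a2 b b1 b2 r1 r2 f1 f2 v1 v2 x1 x2 : ℝ → ℝ}
    (hp : ∀ y, HasDerivAt p (p1 y) y) (hp1 : ∀ y, HasDerivAt p1 (p2 y) y) (cp2 : Continuous p2)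
    (hq : ∀ y, HasDerivAt q (q1 y) y) (hq1 : ∀ y, HasDerivAt q1 (q2 y) y) (cq2 : Continuous q2)
    (ha : ∀ y, HasDerivAt a (a1 y) y) (ha1 : ∀ y, HasDerivAt a1 (a2 y) y) (ca2 : Continuous a2)
    (hb : ∀ y, HasDerivAt b (b1 y) y) (hb1 : ∀ y, HasDerivAt b1 (b2 y) y) (cb2 : Continuous b2)
    (hpa : ∀ y ∈ Set.Icc (-1:ℝ) 1, a2 y = p y + α ^ 2 * a y)
    (hqb : ∀ y ∈ Set.Icc (-1:ℝ) 1, b2 y = q y + α ^ 2 * b y)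
    (pr : p 1 = 0) (pl : p (-1) = 0) (qr : q 1 = 0) (ql : q (-1) = 0)
    (ar : a 1 = 0) (al : a (-1) = 0) (br : b 1 = 0) (bl : b (-1) = 0)
    (hr1 : ∀ y, r1 y = (β - y ^ 2) * p y + 2 * a y)
    (hr2 : ∀ y, r2 y = (β - y ^ 2) * q y + 2 * b y)
    (hf1 : ∀ y, f1 y = -n * (p2 y - α ^ 2 * p y) - s * r2 y)
    (hf2 : ∀ y, f2 y = -n * (q2 y - α ^ 2 * q y) + s * r1 y)
    (hv1 : ∀ y, v1 y = y * p y - a1 y) (hv2 : ∀ y, v2 y = y * q y - b1 y)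
    (hx1 : ∀ y, x1 y = y * p1 y) (hx2 : ∀ y, x2 y = y * q1 y) :
    n * (LL p1 q1 ^ 2 + α ^ 2 * LL p q ^ 2) ≤ LL f1 f2 * LL p q ∧
    LL r1 r2 ^ 2 ≤ LL f1 f2 * LL r1 r2 + 2 * n * (LL p1 q1 * LL v1 v2) ∧
    n * LL x1 x2 ^ 2 ≤ |β| * (LL f1 f2 * LL p q) + LL f1 f2 * LL r1 r2 ∧
    LL v1 v2 ^ 2 + α ^ 2 * LL a b ^ 2 ≤ LL r1 r2 * LL x1 x2 + LL r1 r2 * LL p q / 2 ∧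
    |β| * LL p q ^ 2 ≤ LL r1 r2 * LL p q + 20 * (LL v1 v2 ^ 2 + α ^ 2 * LL a b ^ 2) ∧
    LL p q ≤ 2 * LL x1 x2 := by
  have cp : Continuous p := continuous_iff_continuousAt.2 fun y => (hp y).continuousAt
  have cp1 : Continuous p1 := continuous_iff_continuousAt.2 fun y => (hp1 y).continuousAt
  have cq : Continuous q := continuous_iff_continuousAt.2 fun y => (hq y).continuousAt
  have cq1 : Continuous q1 := continuous_iff_continuousAt.2 fun y => (hq1 y).continuousAt
  have ca : Continuous a := continuous_iff_continuousAt.2 fun y => (ha y).continuousAt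
  have ca1 : Continuous a1 := continuous_iff_continuousAt.2 fun y => (ha1 y).continuousAt
  have cb : Continuous b := continuous_iff_continuousAt.2 fun y => (hb y).continuousAt
  have cb1 : Continuous b1 := continuous_iff_continuousAt.2 fun y => (hb1 y).continuousAt
  obtain rfl : r1 = _ := funext hr1
  obtain rfl : r2 = _ := funext hr2
  obtain rfl : f1 = _ := funext hf1
  obtain rfl : f2 = _ := funext hf2
  obtain rfl : v1 = _ := funext hv1
  obtain rfl : v2 = _ := funext hv2
  obtain rfl : x1 = _ := funext hx1
  obtain rfl : x2 = _ := funext hx2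
  clear hr1 hr2 hf1 hf2 hv1 hv2 hx1 hx2
  set r1 : ℝ → ℝ := fun y => (β - y ^ 2) * p y + 2 * a y with hr1
  set r2 : ℝ → ℝ := fun y => (β - y ^ 2) * q y + 2 * b y with hr2
  set f1 : ℝ → ℝ := fun y => -n * (p2 y - α ^ 2 * p y) - s * r2 y with hf1
  set f2 : ℝ → ℝ := fun y => -n * (q2 y - α ^ 2 * q y) + s * r1 y with hf2
  set v1 : ℝ → ℝ := fun y => y * p y - a1 y with hv1
  set v2 : ℝ → ℝ := fun y => y * q y - b1 y with hv2
  set x1 : ℝ → ℝ := fun y => y * p1 y with hx1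
  set x2 : ℝ → ℝ := fun y => y * q1 y with hx2
  have cr1 : Continuous r1 := by fun_prop
  have cr2 : Continuous r2 := by fun_prop
  have cf1 : Continuous f1 := by fun_prop
  have cf2 : Continuous f2 := by fun_prop
  have cv1 : Continuous v1 := by fun_prop
  have cv2 : Continuous v2 := by fun_prop
  have cx1 : Continuous x1 := by fun_prop
  have cx2 : Continuous x2 := by fun_prop
  have hy2 : ∀ y : ℝ, HasDerivAt (fun y : ℝ => y ^ 2) (2 * y) y := fun y => by
    simpa using hasDerivAt_pow 2 y
  have hy3 : ∀ y : ℝ, HasDerivAt (fun y : ℝ => y ^ 3) (3 * y ^ 2) y := fun y => by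
    simpa using hasDerivAt_pow 3 y
  have hyy : ∀ y : ℝ, HasDerivAt (fun y : ℝ => y) 1 y := hasDerivAt_id
  have dr1 : ∀ y, HasDerivAt r1 ((β - y ^ 2) * p1 y - 2 * v1 y) y := fun y =>
    (((((hy2 y).const_sub β).mul (hp y)).add ((ha y).const_mul 2))).congr_deriv
      (by simp only [hv1]; ring)
  have dr2 : ∀ y, HasDerivAt r2 ((β - y ^ 2) * q1 y - 2 * v2 y) y := fun y =>
    (((((hy2 y).const_sub β).mul (hq y)).add ((hb y).const_mul 2))).congr_deriv
      (by simp only [hv2]; ring)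
  have rr1 : r1 1 = 0 := by simp [hr1, pr, ar]
  have rl1 : r1 (-1) = 0 := by simp [hr1, pl, al]
  have rr2 : r2 1 = 0 := by simp [hr2, qr, br]
  have rl2 : r2 (-1) = 0 := by simp [hr2, ql, bl]
  have E1 : n * (LL p1 q1 ^ 2 + α ^ 2 * LL p q ^ 2) ≤ LL f1 f2 * LL p q := by
    have h := II_key (T := fun y => n * ((p1 y ^ 2 + q1 y ^ 2) + α ^ 2 * (p y ^ 2 + q y ^ 2)))
      (S := fun y => f1 y * p y + f2 y * q y)
      (G := fun y => n * (p1 y * p y + q1 y * q y) + 2 * s * (b y * a1 y - a y * b1 y))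
      (G' := fun y => n * ((p2 y * p y + p1 y * p1 y) + (q2 y * q y + q1 y * q1 y)) +
        2 * s * ((b1 y * a1 y + b y * a2 y) - (a1 y * b1 y + a y * b2 y)))
      (by fun_prop) (by fun_prop)
      (fun y => ((((hp1 y).mul (hp y)).add ((hq1 y).mul (hq y))).const_mul n).add
        ((((hb y).mul (ha1 y)).sub ((ha y).mul (hb1 y))).const_mul (2*s)))
      (by fun_prop) (by simp [pr,pl,qr,ql,ar,al,br,bl])
      (fun y hy => by
        simp only [hf1, hf2, hr1, hr2, hpa y hy, hqb y hy]
        apply le_of_eq; ring)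
    rw [II_smul, II_add (by fun_prop) (by fun_prop), II_smul, ← LL_sq, ← LL_sq] at h
    exact h.trans (LL_cs cf1 cf2 cp cq)
  have E2 : LL r1 r2 ^ 2 ≤ LL f1 f2 * LL r1 r2 + 2 * n * (LL p1 q1 * LL v1 v2) := by
    have h := II_key (T := fun y => (r1 y ^ 2 + r2 y ^ 2))
      (S := fun y => (f1 y * (-s * r2 y) + f2 y * (s * r1 y)) +
        (2 * n) * (p1 y * (-s * v2 y) + q1 y * (s * v1 y)))
      (G := fun y => (n * s) * (q1 y * r1 y - p1 y * r2 y)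
        + (-2 * n * s * α ^ 2) * (b1 y * a y - a1 y * b y))
      (G' := fun y => (n * s) * ((q2 y * r1 y + q1 y * ((β - y ^ 2) * p1 y - 2 * v1 y))
          - (p2 y * r2 y + p1 y * ((β - y ^ 2) * q1 y - 2 * v2 y)))
        + (-2 * n * s * α ^ 2) * ((b2 y * a y + b1 y * a1 y) - (a2 y * b y + a1 y * b1 y)))
      (by fun_prop) (by fun_prop)
      (fun y => (((((hq1 y).mul (dr1 y)).sub ((hp1 y).mul (dr2 y))).const_mul (n*s)).add
        (((((hb1 y).mul (ha y)).sub ((ha1 y).mul (hb y))).const_mul (-2*n*s*α^2)))))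
      (by fun_prop) (by simp [rr1,rl1,rr2,rl2,ar,al,br,bl])
      (fun y hy => by
        simp only [hf1, hf2, hpa y hy, hqb y hy]
        apply le_of_eq
        have e1 : r1 y ^ 2 + r2 y ^ 2 = s ^ 2 * (r1 y ^ 2 + r2 y ^ 2) := by rw [hs]; ring
        rw [e1]
        simp only [hr1, hr2]
        ring)
    rw [← LL_sq, II_add (by fun_prop) (by fun_prop), II_smul] at h
    have e : ∀ g1 g2 : ℝ → ℝ, LL (fun y => -s * g2 y) (fun y => s * g1 y) = LL g1 g2 := by
      intro g1 g2
      unfold LL; congr 2; funext y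
      have : (-s * g2 y) ^ 2 + (s * g1 y) ^ 2 = s ^ 2 * (g1 y ^ 2 + g2 y ^ 2) := by ring
      rw [this, hs, one_mul]
    have h1 := LL_cs cf1 cf2 (a := fun y => -s * r2 y) (b := fun y => s * r1 y)
      (by fun_prop) (by fun_prop)
    have h2 := LL_cs cp1 cq1 (a := fun y => -s * v2 y) (b := fun y => s * v1 y)
      (by fun_prop) (by fun_prop)
    rw [e] at h1 h2
    have h3 := mul_le_mul_of_nonneg_left h2 (by positivity : 0 ≤ 2 * n)
    linarith
  have E3 : n * LL x1 x2 ^ 2 ≤ |β| * (LL f1 f2 * LL p q) + LL f1 f2 * LL r1 r2 := by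
    have h := II_key (T := fun y => n * (x1 y ^ 2 + x2 y ^ 2))
      (S := fun y => (|β| * n) * ((p1 y ^ 2 + q1 y ^ 2) + α ^ 2 * (p y ^ 2 + q y ^ 2))
        + (-(f1 y * r1 y + f2 y * r2 y)))
      (G := fun y => (-n) * (p1 y * r1 y + q1 y * r2 y)
        + (-2 * n) * (y * (p y * p y + q y * q y) * (1/2) - (p y * a1 y + q y * b1 y)))
      (G' := fun y => (-n) * ((p2 y * r1 y + p1 y * ((β - y ^ 2) * p1 y - 2 * v1 y))
          + (q2 y * r2 y + q1 y * ((β - y ^ 2) * q1 y - 2 * v2 y)))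
        + (-2 * n) * ((1 * (p y * p y + q y * q y)
            + y * ((p1 y * p y + p y * p1 y) + (q1 y * q y + q y * q1 y))) * (1/2)
          - ((p1 y * a1 y + p y * a2 y) + (q1 y * b1 y + q y * b2 y))))
      (by fun_prop) (by fun_prop)
      (fun y => (((((hp1 y).mul (dr1 y)).add ((hq1 y).mul (dr2 y))).const_mul (-n)).add
        ((((((hyy y).mul (((hp y).mul (hp y)).add ((hq y).mul (hq y)))).mul_const (1/2)).sub
          (((hp y).mul (ha1 y)).add ((hq y).mul (hb1 y))))).const_mul (-2*n))))
      (by fun_prop) (by simp [rr1,rl1,rr2,rl2,ar,al,br,bl,pr,pl,qr,ql])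
      (fun y hy => by
        have hb1 : β * n * ((p1 y ^ 2 + q1 y ^ 2) + α ^ 2 * (p y ^ 2 + q y ^ 2)) ≤
            |β| * n * ((p1 y ^ 2 + q1 y ^ 2) + α ^ 2 * (p y ^ 2 + q y ^ 2)) := by
          gcongr; exact le_abs_self β
        have hb2 : 0 ≤ n * (p y ^ 2 + q y ^ 2) := by positivity
        have hb3 : 0 ≤ n * α ^ 2 * y ^ 2 * (p y ^ 2 + q y ^ 2) := by positivity
        simp only [hf1, hf2, hpa y hy, hqb y hy, hr1, hr2, hv1, hv2, hx1, hx2]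
        linarith)
    rw [II_smul, ← LL_sq, II_add (by fun_prop) (by fun_prop), II_smul,
      II_add (by fun_prop) (by fun_prop), II_smul, ← LL_sq, ← LL_sq] at h
    have h1 := LL_cs' cf1 cf2 cr1 cr2
    have h2 := mul_le_mul_of_nonneg_left E1 (abs_nonneg β)
    linarith
  have E4 : LL v1 v2 ^ 2 + α ^ 2 * LL a b ^ 2 ≤
      LL r1 r2 * LL x1 x2 + LL r1 r2 * LL p q / 2 := by
    have h := II_key (T := fun y => (v1 y ^ 2 + v2 y ^ 2) + α ^ 2 * (a y ^ 2 + b y ^ 2))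
      (S := fun y => (r1 y * x1 y + r2 y * x2 y) + (1/2) * (r1 y * p y + r2 y * q y))
      (G := fun y => (a y * a1 y + b y * b1 y)
        - (y * (r1 y * p y + r2 y * q y) * (1/2) + y * (a y * p y + b y * q y)))
      (G' := fun y => ((a1 y * a1 y + a y * a2 y) + (b1 y * b1 y + b y * b2 y))
        - ((1 * (r1 y * p y + r2 y * q y) + y * (
            (((β - y ^ 2) * p1 y - 2 * v1 y) * p y + r1 y * p1 y)
            + (((β - y ^ 2) * q1 y - 2 * v2 y) * q y + r2 y * q1 y))) * (1/2)
          + (1 * (a y * p y + b y * q y) + y * ((a1 y * p y + a y * p1 y) +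
            (b1 y * q y + b y * q1 y)))))
      (by fun_prop) (by fun_prop)
      (fun y => ((((ha y).mul (ha1 y)).add ((hb y).mul (hb1 y))).sub
        ((((hyy y).mul (((dr1 y).mul (hp y)).add ((dr2 y).mul (hq y)))).mul_const (1/2)).add
          ((hyy y).mul (((ha y).mul (hp y)).add ((hb y).mul (hq y)))))))
      (by fun_prop) (by simp [rr1,rl1,rr2,rl2,ar,al,br,bl,pr,pl,qr,ql])
      (fun y hy => by
        simp only [hpa y hy, hqb y hy, hr1, hr2, hv1, hv2, hx1, hx2]
        apply le_of_eq; ring)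
    rw [II_add (by fun_prop) (by fun_prop), ← LL_sq, II_smul, ← LL_sq,
      II_add (by fun_prop) (by fun_prop), II_smul] at h
    have h1 := LL_cs cr1 cr2 cx1 cx2
    have h2 := LL_cs cr1 cr2 cp cq
    linarith
  have E6 : LL p q ≤ 2 * LL x1 x2 := by
    have h := II_key (T := fun y => p y ^ 2 + q y ^ 2)
      (S := fun y => 2 * (-(p y * x1 y + q y * x2 y)))
      (G := fun y => y * (p y * p y + q y * q y))
      (G' := fun y => 1 * (p y * p y + q y * q y)
            + y * ((p1 y * p y + p y * p1 y) + (q1 y * q y + q y * q1 y)))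
      (by fun_prop) (by fun_prop)
      (fun y => ((hyy y).mul (((hp y).mul (hp y)).add ((hq y).mul (hq y)))))
      (by fun_prop) (by simp [pr,pl,qr,ql])
      (fun y hy => by
        simp only [hx1, hx2]
        apply le_of_eq; ring)
    rw [II_smul, ← LL_sq] at h
    have h1 := LL_cs' cp cq cx1 cx2
    by_contra hc
    push Not at hc
    have := LL_nonneg x1 x2
    have := LL_nonneg p q
    nlinarith
  have EY : II (fun y => y ^ 2 * (a1 y ^ 2 + b1 y ^ 2)) ≤
      2 * (LL v1 v2 ^ 2 + α ^ 2 * LL a b ^ 2) := by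
    have h := II_key (T := fun y => y ^ 2 * (a1 y ^ 2 + b1 y ^ 2))
      (S := fun y => 2 * ((v1 y ^ 2 + v2 y ^ 2) + α ^ 2 * (a y ^ 2 + b y ^ 2)))
      (G := fun y => y ^ 2 * (a y * a1 y + b y * b1 y) - y * (a y * a y + b y * b y) * (3/2))
      (G' := fun y => (2 * y * (a y * a1 y + b y * b1 y) +
          y ^ 2 * ((a1 y * a1 y + a y * a2 y) + (b1 y * b1 y + b y * b2 y)))
        - (1 * (a y * a y + b y * b y)
            + y * ((a1 y * a y + a y * a1 y) + (b1 y * b y + b y * b1 y))) * (3/2))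
      (by fun_prop) (by fun_prop)
      (fun y => ((hy2 y).mul (((ha y).mul (ha1 y)).add ((hb y).mul (hb1 y)))).sub
        (((hyy y).mul (((ha y).mul (ha y)).add ((hb y).mul (hb y)))).mul_const (3/2)))
      (by fun_prop) (by simp [ar,al,br,bl])
      (fun y hy => by
        have hy2 : y ^ 2 ≤ 1 := by nlinarith [hy.1, hy.2]
        have hα2 : 1 ≤ α ^ 2 := by nlinarith
        have k1 : ∀ a v : ℝ, 0 ≤ 2 * v ^ 2 + y * a * v + a ^ 2 / 2 := by
          intro a v
          have e : 2 * v ^ 2 + y * a * v + a ^ 2 / 2 = (v + y * a / 2) ^ 2 + v ^ 2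
            + (1 - y ^ 2) * a ^ 2 / 4 + a ^ 2 / 4 := by ring
          have : 0 ≤ 1 - y ^ 2 := sub_nonneg.2 hy2
          rw [e]; positivity
        have k2 : a y ^ 2 ≤ α ^ 2 * a y ^ 2 := le_mul_of_one_le_left (sq_nonneg _) hα2
        have k3 : b y ^ 2 ≤ α ^ 2 * b y ^ 2 := le_mul_of_one_le_left (sq_nonneg _) hα2
        have k4 := k1 (a y) (v1 y)
        have k5 := k1 (b y) (v2 y)
        have k6 : 0 ≤ α ^ 2 * y ^ 2 * (a y ^ 2 + b y ^ 2) := by positivity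
        simp only [hpa y hy, hqb y hy, hv1, hv2] at k4 k5 ⊢
        linarith)
    rw [II_smul, II_add (by fun_prop) (by fun_prop),
      II_smul, ← LL_sq, ← LL_sq] at h
    exact h
  have hy4 : ∀ y : ℝ, HasDerivAt (fun y : ℝ => y - y ^ 3) (1 - 3 * y ^ 2) y := fun y =>
    (hyy y).sub (hy3 y)
  set G : ℝ → ℝ := fun y => (y - y ^ 3) * (a1 y * a1 y + b1 y * b1 y)
      - α ^ 2 * ((y - y ^ 3) * (a y * a y + b y * b y))
      - 2 * (a y * a1 y + b y * b1 y) with hG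
  set G' : ℝ → ℝ := fun y => ((1 - 3 * y ^ 2) * (a1 y * a1 y + b1 y * b1 y)
        + (y - y ^ 3) * ((a2 y * a1 y + a1 y * a2 y) + (b2 y * b1 y + b1 y * b2 y)))
      - α ^ 2 * ((1 - 3 * y ^ 2) * (a y * a y + b y * b y)
        + (y - y ^ 3) * ((a1 y * a y + a y * a1 y) + (b1 y * b y + b y * b1 y)))
      - 2 * ((a1 y * a1 y + a y * a2 y) + (b1 y * b1 y + b y * b2 y)) with hG'
  have dG : ∀ y, HasDerivAt G (G' y) y := fun y =>
    (((hy4 y).mul (((ha1 y).mul (ha1 y)).add ((hb1 y).mul (hb1 y)))).sub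
      (((hy4 y).mul (((ha y).mul (ha y)).add ((hb y).mul (hb y)))).const_mul (α^2))).sub
      ((((ha y).mul (ha1 y)).add ((hb y).mul (hb1 y))).const_mul 2)
  have cG' : Continuous G' := by fun_prop
  have bG : G 1 = 0 ∧ G (-1) = 0 := by
    constructor
    · simp [hG, ar, br]
    · simp only [hG, al, bl]; norm_num
  have idn : ∀ y ∈ Set.Icc (-1:ℝ) 1, β * (p y ^ 2 + q y ^ 2) = (r1 y * p y + r2 y * q y)
      + ((v1 y ^ 2 + 5 * y ^ 2 * a1 y ^ 2 + 2 * y ^ 2 * a1 y * v1 y)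
        + (v2 y ^ 2 + 5 * y ^ 2 * b1 y ^ 2 + 2 * y ^ 2 * b1 y * v2 y)
        + 3 * α ^ 2 * (1 - y ^ 2) * (a y ^ 2 + b y ^ 2)) + G' y := by
    intro y hy
    simp only [hG', hpa y hy, hqb y hy, hr1, hr2, hv1, hv2]
    ring
  have pw : ∀ y ∈ Set.Icc (-1:ℝ) 1, ∀ u v : ℝ, 
      0 ≤ v ^ 2 + 5 * y ^ 2 * u ^ 2 + 2 * y ^ 2 * u * v ∧
      v ^ 2 + 5 * y ^ 2 * u ^ 2 + 2 * y ^ 2 * u * v ≤ 2 * v ^ 2 + 6 * (y ^ 2 * u ^ 2) := by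
    intro y hy u v
    have h1 : 0 ≤ 1 - y ^ 2 := by nlinarith [hy.1, hy.2]
    constructor
    · have e : v ^ 2 + 5 * y ^ 2 * u ^ 2 + 2 * y ^ 2 * u * v
        = y ^ 2 * (v + u) ^ 2 + (1 - y ^ 2) * v ^ 2 + 4 * y ^ 2 * u ^ 2 := by ring
      rw [e]; positivity
    · have e : 2 * v ^ 2 + 6 * (y ^ 2 * u ^ 2) - (v ^ 2 + 5 * y ^ 2 * u ^ 2 + 2 * y ^ 2 * u * v)
        = y ^ 2 * (v - u) ^ 2 + (1 - y ^ 2) * v ^ 2 := by ring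
      have : 0 ≤ y ^ 2 * (v - u) ^ 2 + (1 - y ^ 2) * v ^ 2 := by positivity
      linarith
  have hM0 : 0 ≤ LL v1 v2 ^ 2 + α ^ 2 * LL a b ^ 2 := by positivity
  have E5 : |β| * LL p q ^ 2 ≤ LL r1 r2 * LL p q
      + 20 * (LL v1 v2 ^ 2 + α ^ 2 * LL a b ^ 2) := by
    rcases le_total 0 β with hβ | hβ
    · rw [abs_of_nonneg hβ]
      have h := II_key (T := fun y => β * (p y ^ 2 + q y ^ 2))
        (S := fun y => (r1 y * p y + r2 y * q y) +
          (6 * (y ^ 2 * (a1 y ^ 2 + b1 y ^ 2)) +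
            3 * ((v1 y ^ 2 + v2 y ^ 2) + α ^ 2 * (a y ^ 2 + b y ^ 2))))
        (by fun_prop) (by fun_prop) dG cG' (by rw [bG.1, bG.2])
        (fun y hy => by
          have h1 := idn y hy
          have h2 := (pw y hy (a1 y) (v1 y)).2
          have h3 := (pw y hy (b1 y) (v2 y)).2
          have h4 : 0 ≤ α ^ 2 * y ^ 2 * (a y ^ 2 + b y ^ 2) := by positivity
          have h5 := sq_nonneg (v1 y)
          have h6 := sq_nonneg (v2 y)
          generalize G' y = g at *
          generalize v1 y = V1 at *
          generalize v2 y = V2 at *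
          generalize r1 y = R1 at *
          generalize r2 y = R2 at *
          linarith)
      rw [II_smul, ← LL_sq, II_add (f := fun y => r1 y * p y + r2 y * q y)
        (by fun_prop) (by fun_prop),
        II_add (f := fun y => 6 * (y ^ 2 * (a1 y ^ 2 + b1 y ^ 2)))
        (by fun_prop) (by fun_prop), II_smul, II_smul,
        II_add (f := fun y => v1 y ^ 2 + v2 y ^ 2) (by fun_prop) (by fun_prop),
        II_smul, ← LL_sq, ← LL_sq] at h
      have h1 := LL_cs cr1 cr2 cp cq
      linarith
    · rw [abs_of_nonpos hβ]
      have h := II_key (T := fun y => (-β) * (p y ^ 2 + q y ^ 2))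
        (S := fun y => -(r1 y * p y + r2 y * q y))
        (G := fun y => - G y) (G' := fun y => - G' y)
        (by fun_prop) (by fun_prop) (fun y => (dG y).neg) cG'.neg (by rw [bG.1, bG.2])
        (fun y hy => by
          have h1 := idn y hy
          have h2 := (pw y hy (a1 y) (v1 y)).1
          have h3 := (pw y hy (b1 y) (v2 y)).1
          have h0 : 0 ≤ 1 - y ^ 2 := by nlinarith [hy.1, hy.2]
          have h4 : 0 ≤ 3 * α ^ 2 * (1 - y ^ 2) * (a y ^ 2 + b y ^ 2) := by positivity
          linarith)
      rw [II_smul, ← LL_sq] at h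
      have h1 := LL_cs' cr1 cr2 cp cq
      linarith
  exact ⟨E1, E2, E3, E4, E5, E6⟩

lemma le_of_sq_le_sq₀' {x y : ℝ} (h : x ^ 2 ≤ y ^ 2) (hy : 0 ≤ y) : x ≤ y :=
  (abs_le_of_sq_le_sq' h hy).2

lemma alg_bound {ω ρ ξ ζ μ : ℝ} (hω : 0 ≤ ω) (hρ : 0 ≤ ρ) (hξ : 0 ≤ ξ) (hζ : 0 ≤ ζ) (hμ : 0 ≤ μ)
    (h1 : ξ ^ 2 ≤ ω + ρ) (h2 : ζ ^ 2 ≤ ω) (h3 : ρ ^ 2 ≤ ρ + 2 * (ζ * μ)) (h4 : μ ^ 2 ≤ 2 * (ρ * ξ))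
    (h5 : ω ^ 2 ≤ 4 * (ρ * ω) + 160 * (ρ * ξ) ∨ ω ≤ 6 * ξ) : ω ≤ 110000 := by
  have hA : ω ≤ 100 * (1 + ρ) := by
    by_contra hc
    push Not at hc
    have hω1 : 100 ≤ ω := by linarith
    have hρ1 : ρ ≤ ω / 100 := by linarith
    have hξ1 : ξ ≤ ω / 9 := by
      exact le_of_sq_le_sq₀' (by nlinarith) (by positivity)
    rcases h5 with h5 | h5
    · have e1 : ρ * ω ≤ ω / 100 * ω := by gcongr
      have e2 : ρ * ξ ≤ ω / 100 * (ω / 9) := by gcongr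
      nlinarith
    · linarith
  obtain ⟨u, hu, hut⟩ : ∃ u : ℝ, 1 ≤ u ∧ u ^ 2 = 1 + ρ :=
    ⟨√(1 + ρ), Real.one_le_sqrt.2 (by linarith), Real.sq_sqrt (by linarith)⟩
  have hζ1 : ζ ≤ 10 * u := le_of_sq_le_sq₀' (by nlinarith) (by positivity)
  have hξ1 : ξ ≤ 11 * u := le_of_sq_le_sq₀' (by nlinarith) (by positivity)
  have hμ1 : μ ^ 2 ≤ 22 * u ^ 3 := by
    have : ρ * ξ ≤ u ^ 2 * (11 * u) := by gcongr; linarith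
    nlinarith
  have hu33 : u ≤ 33 := by
    by_contra hc
    push Not at hc
    have a1 : (ζ * μ) ^ 2 ≤ (10 * u) ^ 2 * (22 * u ^ 3) := by
      rw [mul_pow]; gcongr
    have hu2 : 1000 ≤ u ^ 2 := by nlinarith
    have a2 : u ^ 4 / 4 ≤ ζ * μ := by
      have e : ρ = u ^ 2 - 1 := by linarith
      rw [e] at h3
      nlinarith
    have a3 : (u ^ 4 / 4) ^ 2 ≤ (ζ * μ) ^ 2 := by gcongr
    have a4 : u ^ 3 * u ^ 5 ≤ 35200 * u ^ 5 := by nlinarith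
    have a5 : u ^ 3 ≤ 35200 := le_of_mul_le_mul_right a4 (by positivity)
    have a6 : (33:ℝ) ^ 3 ≤ u ^ 3 := by gcongr
    norm_num at a6
    linarith
  nlinarith

set_option maxHeartbeats 2000000 in
lemma norm_bound {n m δ α β W W1 R V X F P : ℝ} (hm : 0 < m) (hδ : 0 < δ) (hn : n = m * δ ^ 3)
    (hα : 1 ≤ α) (hβ : |β| ≤ m ^ 2) (hδm : δ ≤ m) (hcase : m ^ 2 ≤ 4 * |β| ∨ m ≤ 3 * δ)
    (hW : 0 ≤ W) (hW1 : 0 ≤ W1) (hR : 0 ≤ R) (hV : 0 ≤ V) (hX : 0 ≤ X) (hF : 0 ≤ F)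
    (E1 : n * (W1 ^ 2 + α ^ 2 * W ^ 2) ≤ F * W)
    (E2 : R ^ 2 ≤ F * R + 2 * n * (W1 * V))
    (E3 : n * X ^ 2 ≤ |β| * (F * W) + F * R)
    (E4 : V ^ 2 + α ^ 2 * P ^ 2 ≤ R * X + R * W / 2)
    (E5 : |β| * W ^ 2 ≤ R * W + 20 * (V ^ 2 + α ^ 2 * P ^ 2))
    (E6 : W ≤ 2 * X) : m * δ * W ≤ 110000 * F := by
  have hn0 : 0 < n := by rw [hn]; positivity
  have hα2 : 1 ≤ α ^ 2 := by nlinarith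
  rcases hF.eq_or_lt with h0 | hF0
  · rw [← h0] at E1 ⊢
    have : W ^ 2 ≤ 0 := by
      have h1 : W1 ^ 2 + α ^ 2 * W ^ 2 ≤ 0 := by
        by_contra hc
        push Not at hc
        have := mul_pos hn0 hc
        linarith
      nlinarith [sq_nonneg W1, sq_nonneg W]
    have : W = 0 := by nlinarith
    simp [this]
  have hRW : R * W ≤ R * (2 * X) := by gcongr
  have hM : V ^ 2 + α ^ 2 * P ^ 2 ≤ 2 * (R * X) := by linarith
  have hP : 0 ≤ α ^ 2 * P ^ 2 := by positivity
  have hx := alg_bound (ω := m * δ * W / F) (ρ := R / F) (ξ := δ ^ 2 * X / F)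
    (ζ := m * δ ^ 2 * W1 / F) (μ := δ * V / F) (by positivity) (by positivity) (by positivity)
    (by positivity) (by positivity) ?_ ?_ ?_ ?_ ?_
  · rwa [div_le_iff₀ hF0] at hx
  · rw [div_pow, ← add_div, div_le_div_iff₀ (by positivity) hF0]
    have : m * (δ ^ 2 * X) ^ 2 ≤ m * ((m * δ * W + R) * F) := by
      have e1 : m * (δ ^ 2 * X) ^ 2 = δ * (n * X ^ 2) := by rw [hn]; ring
      have e2 : δ * (n * X ^ 2) ≤ δ * (m ^ 2 * (F * W) + F * R) := by
        gcongr
        refine E3.trans ?_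
        gcongr
      have e3 : δ * (F * R) ≤ m * (F * R) := by gcongr
      nlinarith
    have := le_of_mul_le_mul_left this hm
    nlinarith
  · rw [div_pow, div_le_div_iff₀ (by positivity) hF0]
    have : (m * δ ^ 2 * W1) ^ 2 ≤ m * δ * W * F := by
      have e1 : (m * δ ^ 2 * W1) ^ 2 = m * δ * (n * W1 ^ 2) := by rw [hn]; ring
      have e2 : n * W1 ^ 2 ≤ F * W := by
        refine le_trans ?_ E1
        gcongr
        nlinarith [sq_nonneg W]
      rw [e1]
      calc m * δ * (n * W1 ^ 2) ≤ m * δ * (F * W) := by gcongr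
        _ = _ := by ring
    nlinarith
  · have e : R / F + 2 * (m * δ ^ 2 * W1 / F * (δ * V / F)) = (F * R + 2 * n * (W1 * V)) / F ^ 2 := by
      rw [hn]; field_simp
    rw [e, div_pow]
    gcongr
  · have e : 2 * (R / F * (δ ^ 2 * X / F)) = (δ ^ 2 * (2 * (R * X))) / F ^ 2 := by
      field_simp
    rw [e, div_pow, mul_pow]
    gcongr
    linarith
  · rcases hcase with hc | hc
    · left
      have e : 4 * (R / F * (m * δ * W / F)) + 160 * (R / F * (δ ^ 2 * X / F))
        = (4 * (R * (m * δ * W)) + 160 * (R * (δ ^ 2 * X))) / F ^ 2 := by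
        field_simp
      rw [e, div_pow]
      gcongr
      have e1 : (m * δ * W) ^ 2 ≤ 4 * |β| * (δ * W) ^ 2 := by
        rw [mul_assoc, mul_pow]; gcongr
      have e2 : δ ^ 2 * (|β| * W ^ 2) ≤ δ ^ 2 * (R * W + 40 * (R * X)) := by
        gcongr; linarith
      have e3 : R * (δ * δ * W) ≤ R * (m * δ * W) := by gcongr
      nlinarith
    · right
      rw [← mul_div_assoc]
      refine div_le_div_of_nonneg_right ?_ hF0.le
      calc m * δ * W ≤ 3 * δ * δ * (2 * X) := by gcongr
        _ = 6 * (δ ^ 2 * X) := by ring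

lemma l2_eq (w : ℝ → ℂ) : l2 w = LL (fun y => (w y).re) (fun y => (w y).im) := by
  unfold l2 LL II
  congr 2; funext y
  rw [Complex.sq_norm, Complex.normSq_apply]; ring

lemma l2_sq (w : ℝ → ℂ) : l2 w ^ 2 = ∫ y in (-1:ℝ)..1, ‖w y‖ ^ 2 :=
  Real.sq_sqrt (intervalIntegral.integral_nonneg (by norm_num) fun y _ => by positivity)

lemma l2_nonneg (w : ℝ → ℂ) : 0 ≤ l2 w := Real.sqrt_nonneg _

lemma hasDerivAt_re {w : ℝ → ℂ} {w' : ℂ} {y : ℝ} (h : HasDerivAt w w' y) :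
    HasDerivAt (fun y => (w y).re) w'.re y :=
  Complex.reCLM.hasFDerivAt.comp_hasDerivAt y h

lemma hasDerivAt_im {w : ℝ → ℂ} {w' : ℂ} {y : ℝ} (h : HasDerivAt w w' y) :
    HasDerivAt (fun y => (w y).im) w'.im y :=
  Complex.imCLM.hasFDerivAt.comp_hasDerivAt y h

lemma c2_facts {w : ℝ → ℂ} (h : ContDiff ℝ 2 w) :
    (∀ y, HasDerivAt w (deriv w y) y) ∧ (∀ y, HasDerivAt (deriv w) (deriv (deriv w) y) y) ∧
    Continuous (deriv (deriv w)) := by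
  have h2 : ContDiff ℝ (1 + 1) w := by simpa [one_add_one_eq_two] using h
  have h1 : ContDiff ℝ 1 (deriv w) := (contDiff_succ_iff_deriv.1 h2).2.2
  refine ⟨fun y => (h.differentiable (by norm_num) y).hasDerivAt,
    fun y => (h1.differentiable (by norm_num) y).hasDerivAt, h1.continuous_deriv (by norm_num)⟩

lemma main_est {n m δ α β s : ℝ} (hm : 0 < m) (hδ : 0 < δ) (hn : n = m * δ ^ 3)
    (hα : 1 ≤ α) (hβ : |β| ≤ m ^ 2) (hδm : δ ≤ m) (hcase : m ^ 2 ≤ 4 * |β| ∨ m ≤ 3 * δ)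
    (hs : s ^ 2 = 1) {w φ f : ℝ → ℂ} (hw : ContDiff ℝ 2 w) (hφ : ContDiff ℝ 2 φ)
    (hwφ : ∀ y ∈ Set.Icc (-1:ℝ) 1, deriv (deriv φ) y - (α : ℂ) ^ 2 * φ y = w y)
    (φl : φ (-1) = 0) (φr : φ 1 = 0) (wl : w (-1) = 0) (wr : w 1 = 0)
    (hf : ∀ y, f y = -(n : ℂ) * (deriv (deriv w) y - (α : ℂ) ^ 2 * w y) +
      Complex.I * (s : ℂ) * (((β : ℂ) - (y : ℂ) ^ 2) * w y + 2 * φ y)) :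
    m * δ * l2 w ≤ 110000 * l2 f ∧
      n * (l2 (deriv w) ^ 2 + α ^ 2 * l2 w ^ 2) ≤ l2 f * l2 w := by
  have hn0 : 0 < n := by rw [hn]; positivity
  obtain ⟨w0, w1, cw⟩ := c2_facts hw
  obtain ⟨p0, p1, cφ⟩ := c2_facts hφ
  have hα2 : ((α : ℂ) ^ 2).re = α ^ 2 ∧ ((α : ℂ) ^ 2).im = 0 := by
    rw [← Complex.ofReal_pow]; exact ⟨Complex.ofReal_re _, Complex.ofReal_im _⟩
  have hy2 : ∀ y : ℝ, ((y : ℂ) ^ 2).re = y ^ 2 ∧ ((y : ℂ) ^ 2).im = 0 := fun y => by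
    rw [← Complex.ofReal_pow]; exact ⟨Complex.ofReal_re _, Complex.ofReal_im _⟩
  have h := core_ineq (β := β) hn0 hs hα
    (fun y => hasDerivAt_re (w0 y)) (fun y => hasDerivAt_re (w1 y)) (Complex.continuous_re.comp cw)
    (fun y => hasDerivAt_im (w0 y)) (fun y => hasDerivAt_im (w1 y)) (Complex.continuous_im.comp cw)
    (fun y => hasDerivAt_re (p0 y)) (fun y => hasDerivAt_re (p1 y)) (Complex.continuous_re.comp cφ)
    (fun y => hasDerivAt_im (p0 y)) (fun y => hasDerivAt_im (p1 y)) (Complex.continuous_im.comp cφ)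
    (fun y hy => by
      have := congrArg Complex.re (hwφ y hy)
      simp [hα2] at this ⊢
      linarith)
    (fun y hy => by
      have := congrArg Complex.im (hwφ y hy)
      simp [hα2] at this ⊢
      linarith)
    (by simp [wr]) (by simp [wl]) (by simp [wr]) (by simp [wl])
    (by simp [φr]) (by simp [φl]) (by simp [φr]) (by simp [φl])
    (fun _ => rfl) (fun _ => rfl)
    (f1 := fun y => (f y).re) (f2 := fun y => (f y).im)
    (r1 := fun y => (β - y ^ 2) * (w y).re + 2 * (φ y).re)
    (r2 := fun y => (β - y ^ 2) * (w y).im + 2 * (φ y).im)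
    (v1 := fun y => y * (w y).re - (deriv φ y).re) (v2 := fun y => y * (w y).im - (deriv φ y).im)
    (x1 := fun y => y * (deriv w y).re) (x2 := fun y => y * (deriv w y).im)
    (fun y => by simp [hf, hα2, hy2]; ring) (fun y => by simp [hf, hα2, hy2])
    (fun _ => rfl) (fun _ => rfl) (fun _ => rfl) (fun _ => rfl)
  rw [← l2_eq, ← l2_eq, ← l2_eq] at h
  obtain ⟨E1, E2, E3, E4, E5, E6⟩ := h
  exact ⟨norm_bound hm hδ hn hα hβ hδm hcase (l2_nonneg _) (l2_nonneg _) (LL_nonneg _ _)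
    (LL_nonneg _ _) (LL_nonneg _ _) (l2_nonneg _) E1 E2 E3 E4 E5 E6, E1⟩


lemma final_alg {n m δ W H Q G ε : ℝ} (hm : 0 < m) (hδ : 0 < δ) (hn : n = m * δ ^ 3)
    (hδm : δ ≤ m) (hW : 0 ≤ W) (hQ : 0 ≤ Q) (hG : 0 ≤ G) (hε : 0 ≤ ε)
    (hε1 : ε ≤ 1 / 220000) (h1 : m * δ * W ≤ 110000 * Q) (h2 : n * H ^ 2 ≤ Q * W)
    (h3 : Q ^ 2 ≤ 2 * G ^ 2 + 2 * ε ^ 2 * n * W ^ 2) :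
    m * δ * W ≤ 220000 * G ∧ m * δ ^ 2 * H ≤ 220000 * G := by
  have hnm : n ≤ (m * δ) ^ 2 := by
    rw [hn]
    have : m * δ ^ 2 * δ ≤ m * δ ^ 2 * m := by gcongr
    nlinarith
  have hn0 : 0 ≤ n := by rw [hn]; positivity
  have hq : Q ^ 2 ≤ 4 * G ^ 2 := by
    have e1 : ε ^ 2 * n * W ^ 2 ≤ (1 / 220000) ^ 2 * (m * δ) ^ 2 * W ^ 2 := by gcongr
    have e2 : (m * δ * W) ^ 2 ≤ (110000 * Q) ^ 2 := by gcongr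
    nlinarith
  have hq' : Q ≤ 2 * G := le_of_sq_le_sq₀' (by nlinarith) (by positivity)
  refine ⟨by linarith, le_of_sq_le_sq₀' ?_ (by positivity)⟩
  have e1 : (m * δ ^ 2 * H) ^ 2 = m * δ * (n * H ^ 2) := by rw [hn]; ring
  have e2 : m * δ * (n * H ^ 2) ≤ m * δ * (Q * W) := by gcongr
  have e3 : m * δ * W * Q ≤ 110000 * Q * Q := by gcongr
  nlinarith

lemma weights {n m δ : ℝ} (hm : 0 < m) (hδ : 0 < δ) (hn : n = m * δ ^ 3) :
    n ^ ((2:ℝ)/3) * m ^ ((1:ℝ)/3) = m * δ ^ 2 ∧ n ^ ((1:ℝ)/3) * m ^ ((2:ℝ)/3) = m * δ := by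
  have a1 : (δ ^ 3) ^ ((2:ℝ)/3) = δ ^ 2 := by
    rw [← Real.rpow_natCast, ← Real.rpow_mul hδ.le, ← Real.rpow_natCast]; norm_num
  have a2 : (δ ^ 3) ^ ((1:ℝ)/3) = δ := by
    rw [← Real.rpow_natCast, ← Real.rpow_mul hδ.le]; norm_num
  have b : m ^ ((2:ℝ)/3) * m ^ ((1:ℝ)/3) = m := by
    rw [← Real.rpow_add hm]; norm_num
  rw [hn, Real.mul_rpow hm.le (by positivity), Real.mul_rpow hm.le (by positivity), a1, a2]
  constructor
  · linear_combination δ ^ 2 * b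
  · linear_combination δ * b

lemma weight_le {ν K M m δ : ℝ} (hν : 0 < ν) (hK : 0 < K) (hm : 0 < m) (hδ : 0 < δ)
    (hn : ν / K = m * δ ^ 3) (hM : 0 ≤ M) (hMm : M ≤ 2 * m) :
    ν ^ ((2:ℝ)/3) * K ^ ((1:ℝ)/3) * M ^ ((1:ℝ)/3) ≤ 2 * K * (m * δ ^ 2) ∧
    ν ^ ((1:ℝ)/3) * K ^ ((2:ℝ)/3) * M ^ ((2:ℝ)/3) ≤ 2 * K * (m * δ) := by
  obtain ⟨h1, h2⟩ := weights hm hδ hn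
  have hνe : ν = K * (ν / K) := by field_simp
  have b : K ^ ((2:ℝ)/3) * K ^ ((1:ℝ)/3) = K := by
    rw [← Real.rpow_add hK]; norm_num
  have two : ∀ t : ℝ, 0 ≤ t → t ≤ 1 → M ^ t ≤ 2 * m ^ t := fun t ht ht1 => by
    calc M ^ t ≤ (2 * m) ^ t := by gcongr
      _ = 2 ^ t * m ^ t := Real.mul_rpow (by norm_num) hm.le
      _ ≤ 2 ^ (1:ℝ) * m ^ t := by gcongr; norm_num
      _ = _ := by norm_num
  have e1 : ν ^ ((2:ℝ)/3) = K ^ ((2:ℝ)/3) * (ν / K) ^ ((2:ℝ)/3) := by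
    rw [← Real.mul_rpow hK.le (by positivity), ← hνe]
  have e2 : ν ^ ((1:ℝ)/3) = K ^ ((1:ℝ)/3) * (ν / K) ^ ((1:ℝ)/3) := by
    rw [← Real.mul_rpow hK.le (by positivity), ← hνe]
  constructor
  · calc ν ^ ((2:ℝ)/3) * K ^ ((1:ℝ)/3) * M ^ ((1:ℝ)/3)
        ≤ ν ^ ((2:ℝ)/3) * K ^ ((1:ℝ)/3) * (2 * m ^ ((1:ℝ)/3)) := by
          gcongr; exact two _ (by norm_num) (by norm_num)
      _ = 2 * (K ^ ((2:ℝ)/3) * K ^ ((1:ℝ)/3)) * ((ν / K) ^ ((2:ℝ)/3) * m ^ ((1:ℝ)/3)) := by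
          rw [e1]; ring
      _ = _ := by rw [b, h1]
  · calc ν ^ ((1:ℝ)/3) * K ^ ((2:ℝ)/3) * M ^ ((2:ℝ)/3)
        ≤ ν ^ ((1:ℝ)/3) * K ^ ((2:ℝ)/3) * (2 * m ^ ((2:ℝ)/3)) := by
          gcongr; exact two _ (by norm_num) (by norm_num)
      _ = 2 * (K ^ ((2:ℝ)/3) * K ^ ((1:ℝ)/3)) * ((ν / K) ^ ((1:ℝ)/3) * m ^ ((2:ℝ)/3)) := by
          rw [e2]; ring
      _ = _ := by rw [b, h2]

lemma scales {n β : ℝ} (hn : 0 < n) : ∃ e m δ : ℝ, 0 < e ∧ e ^ 2 = √n ∧ n ^ ((1:ℝ)/4) = e ∧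
    m = √|β| + e ∧ 0 < m ∧ 0 < δ ∧
    n = m * δ ^ 3 ∧ |β| ≤ m ^ 2 ∧ δ ≤ m ∧ (m ^ 2 ≤ 4 * |β| ∨ m ≤ 3 * δ) := by
  have he : 0 < n ^ ((1:ℝ)/4) := by positivity
  have he4 : (n ^ ((1:ℝ)/4)) ^ 4 = n := by
    rw [← Real.rpow_natCast, ← Real.rpow_mul hn.le]; norm_num
  have he2 : (n ^ ((1:ℝ)/4)) ^ 2 = √n := by
    rw [← Real.rpow_natCast, ← Real.rpow_mul hn.le, Real.sqrt_eq_rpow]; norm_num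
  generalize n ^ ((1:ℝ)/4) = e at *
  have hb := Real.sqrt_nonneg |β|
  have hb2 := Real.sq_sqrt (abs_nonneg β)
  have hm : 0 < √|β| + e := by positivity
  have hd : 0 < (n / (√|β| + e)) ^ ((1:ℝ)/3) := by positivity
  have hd3 : ((n / (√|β| + e)) ^ ((1:ℝ)/3)) ^ 3 = n / (√|β| + e) := by
    rw [← Real.rpow_natCast, ← Real.rpow_mul (by positivity)]; norm_num
  generalize (n / (√|β| + e)) ^ ((1:ℝ)/3) = δ at *
  generalize √|β| = b at *
  have hn' : n = (b + e) * δ ^ 3 := by rw [hd3]; field_simp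
  refine ⟨e, b + e, δ, he, he2, rfl, rfl, hm, hd, hn', by nlinarith, ?_, ?_⟩
  · have h4 : (b + e) * δ ^ 3 ≤ (b + e) * (b + e) ^ 3 := by
      rw [← hn', ← he4]
      calc e ^ 4 ≤ (b + e) ^ 4 := by gcongr; linarith
        _ = _ := by ring
    exact le_of_pow_le_pow_left₀ (by norm_num) hm.le (le_of_mul_le_mul_left h4 hm)
  · rcases le_total e b with h | h
    · left; rw [← hb2]; nlinarith
    · right
      have h4 : (b + e) * ((b + e) ^ 3) ≤ (b + e) * (3 * δ) ^ 3 := by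
        calc (b + e) * ((b + e) ^ 3) = (b + e) ^ 4 := by ring
          _ ≤ (2 * e) ^ 4 := by gcongr; linarith
          _ ≤ 27 * e ^ 4 := by nlinarith [pow_pos he 4]
          _ = (b + e) * (3 * δ) ^ 3 := by rw [he4, hn']; ring
      exact le_of_pow_le_pow_left₀ (by norm_num) (by positivity) (le_of_mul_le_mul_left h4 hm)

lemma perturb {ε n K s : ℝ} (hK : 0 < K) (hn : 0 ≤ n) (hs : s ^ 2 = 1) {F w g : ℝ → ℂ}
    (hw : Continuous w) (hg : Continuous g)
    (hF : IntervalIntegrable (fun y => ‖F y‖ ^ 2) MeasureTheory.volume (-1) 1)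
    (h : ∀ y ∈ Set.Icc (-1:ℝ) 1,
      F y = (K : ℂ) * (g y - ((s * (ε * √n) : ℝ) : ℂ) * w y)) :
    l2 g ^ 2 ≤ 2 * (l2 F / K) ^ 2 + 2 * ε ^ 2 * n * l2 w ^ 2 := by
  rw [div_pow, l2_sq, l2_sq, l2_sq]
  have hw2 : IntervalIntegrable (fun y => ‖w y‖ ^ 2) volume (-1) 1 :=
    (hw.norm.pow 2).intervalIntegrable _ _
  have hg2 : IntervalIntegrable (fun y => ‖g y‖ ^ 2) volume (-1) 1 :=
    (hg.norm.pow 2).intervalIntegrable _ _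
  have key : ∫ y in (-1:ℝ)..1, ‖g y‖ ^ 2 ≤
      ∫ y in (-1:ℝ)..1, (2 / K ^ 2 * ‖F y‖ ^ 2 + 2 * ε ^ 2 * n * ‖w y‖ ^ 2) := by
    refine intervalIntegral.integral_mono_on (by norm_num) hg2
      ((hF.const_mul _).add (hw2.const_mul _)) fun y hy => ?_
    have hKc : (K : ℂ) ≠ 0 := by exact_mod_cast hK.ne'
    have e : g y = F y / (K : ℂ) + ((s * (ε * √n) : ℝ) : ℂ) * w y := by
      rw [h y hy]; field_simp; ring
    have e1 : ‖g y‖ ≤ ‖F y‖ / K + |s * (ε * √n)| * ‖w y‖ := by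
      rw [e]
      refine (norm_add_le _ _).trans ?_
      rw [norm_div, norm_mul, Complex.norm_real, Complex.norm_real, Real.norm_eq_abs,
        Real.norm_eq_abs, abs_of_pos hK]
    have e2 : |s * (ε * √n)| ^ 2 = ε ^ 2 * n := by
      rw [sq_abs, mul_pow, mul_pow, hs, Real.sq_sqrt hn, one_mul]
    calc ‖g y‖ ^ 2 ≤ (‖F y‖ / K + |s * (ε * √n)| * ‖w y‖) ^ 2 := by gcongr
      _ ≤ 2 * ((‖F y‖ / K) ^ 2 + (|s * (ε * √n)| * ‖w y‖) ^ 2) := add_sq_le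
      _ = _ := by rw [mul_pow, e2, div_pow]; ring
  refine key.trans (le_of_eq ?_)
  rw [intervalIntegral.integral_add (hF.const_mul _) (hw2.const_mul _),
    intervalIntegral.integral_const_mul, intervalIntegral.integral_const_mul]
  ring

/-- **Weighted resolvent estimate with Navier-slip boundary condition**
(Corollary 2.3): for `λ = λ_r - iεν^{1/2}|k₁|^{-1/2}`,
`ν^{2/3}|k₁|^{1/3}(|λ-1|^{1/2}+|ν/k₁|^{1/4})^{1/3}‖(∂_y,|k|)w‖_{L²}
 + ν^{1/3}|k₁|^{2/3}(|λ-1|^{1/2}+|ν/k₁|^{1/4})^{2/3}‖w‖_{L²} ≤ C‖F‖_{L²}`. -/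
theorem OS_slip_resolvent_L2_lambda_weight :
    ∃ ε₀ ν₀ C : ℝ, 0 < ε₀ ∧ ε₀ < 1 ∧ 0 < ν₀ ∧ ν₀ < 1 ∧ 0 < C ∧
      ∀ (ν ε lamr : ℝ) (lam : ℂ) (k₁ k₃ : ℤ) (w φ F : ℝ → ℂ),
        0 < ν → ν ≤ ν₀ → 0 ≤ ε → ε ≤ ε₀ → 1 ≤ |k₁| →
        lam = (lamr : ℂ) -
          Complex.I * ((ε * Real.sqrt ν / Real.sqrt |(k₁ : ℝ)| : ℝ) : ℂ) →
        IntervalIntegrable (fun y => ‖F y‖ ^ 2) MeasureTheory.volume (-1) 1 →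
        OSslip ν k₁ k₃ lam w φ F →
        ν ^ ((2:ℝ)/3) * |(k₁ : ℝ)| ^ ((1:ℝ)/3) *
            (Real.sqrt ‖lam - 1‖ + (ν / |(k₁ : ℝ)|) ^ ((1:ℝ)/4)) ^ ((1:ℝ)/3) *
            hk k₁ k₃ w
          + ν ^ ((1:ℝ)/3) * |(k₁ : ℝ)| ^ ((2:ℝ)/3) *
            (Real.sqrt ‖lam - 1‖ + (ν / |(k₁ : ℝ)|) ^ ((1:ℝ)/4)) ^ ((2:ℝ)/3) *
            l2 w
          ≤ C * l2 F := by
  refine ⟨1 / 220000, 1 / 2, 880000, by norm_num, by norm_num, by norm_num, by norm_num,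
    by norm_num, ?_⟩
  intro ν ε lamr lam k₁ k₃ w φ F hν _ hε hε1 hk1 hlam hF ⟨hw, hφ, hE, hwφ, φl, φr, φ2l, φ2r⟩
  have wl : w (-1) = 0 := by rw [← hwφ (-1) (by norm_num), φ2l, φl]; simp
  have wr : w 1 = 0 := by rw [← hwφ 1 (by norm_num), φ2r, φr]; simp
  have hK1 : (1:ℝ) ≤ |(k₁ : ℝ)| := by exact_mod_cast hk1
  obtain ⟨K, hKdef⟩ : ∃ K : ℝ, K = |(k₁ : ℝ)| := ⟨_, rfl⟩
  rw [← hKdef] at hK1 hlam ⊢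
  have hK : 0 < K := by linarith
  have hα : 1 ≤ kabs k₁ k₃ := by
    unfold kabs
    rw [Real.one_le_sqrt, ← sq_abs (k₁ : ℝ), ← hKdef]
    nlinarith [sq_nonneg (k₃ : ℝ)]
  have hn : 0 < ν / K := by positivity
  obtain ⟨s, hsdef⟩ : ∃ s : ℝ, s = (k₁ : ℝ) / K := ⟨_, rfl⟩
  have hs : s ^ 2 = 1 := by
    rw [hsdef, div_pow, ← sq_abs (k₁ : ℝ), ← hKdef]; field_simp
  obtain ⟨e, m, δ, he, he2, hne, hm, hm0, hδ, hnm, hβ, hδm, hcase⟩ :=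
    scales (β := 1 - lamr) hn
  have hsq : ε * √ν / √K = ε * √(ν / K) := by
    rw [Real.sqrt_div hν.le, mul_div_assoc]
  rw [hsq] at hlam
  obtain ⟨w0, w1, cw⟩ := c2_facts hw
  obtain ⟨g, hg⟩ : ∃ g : ℝ → ℂ, ∀ y, g y = -((ν / K : ℝ) : ℂ) *
      (deriv (deriv w) y - ((kabs k₁ k₃ : ℝ) : ℂ) ^ 2 * w y) +
      Complex.I * (s : ℂ) * ((((1 - lamr : ℝ) : ℂ) - (y : ℂ) ^ 2) * w y + 2 * φ y) :=
    ⟨_, fun _ => rfl⟩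
  have hgc : Continuous g := by
    rw [show g = _ from funext hg]
    have := hw.continuous
    have := hφ.continuous
    fun_prop
  obtain ⟨M1, M2⟩ := main_est hm0 hδ hnm hα hβ hδm hcase hs hw hφ hwφ φl φr wl wr hg
  have hP := perturb (ε := ε) hK hn.le hs hw.continuous hgc hF (fun y hy => by
    rw [← hE y hy, hg y, hlam]
    have h1 : (ν : ℂ) = K * ((ν / K : ℝ) : ℂ) := by
      rw [← Complex.ofReal_mul]; congr 1; field_simp
    have h2 : (k₁ : ℂ) = K * (s : ℂ) := by
      rw [hsdef, ← Complex.ofReal_mul, ← Complex.ofReal_intCast]; congr 1; field_simp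
    rw [h1, h2]
    push_cast
    have hI := Complex.I_sq
    linear_combination ((K : ℂ) * s * ε * ((√(ν / K) : ℝ) : ℂ) * w y) * hI)
  have hkn : 0 ≤ hk k₁ k₃ w := Real.sqrt_nonneg _
  have hkk : hk k₁ k₃ w ^ 2 = l2 (deriv w) ^ 2 + kabs k₁ k₃ ^ 2 * l2 w ^ 2 := by
    have := l2_sq (deriv w)
    have := l2_sq w
    unfold hk
    rw [← l2_sq, ← l2_sq, Real.sq_sqrt (by positivity)]
  rw [← hkk] at M2
  obtain ⟨N1, N2⟩ := final_alg hm0 hδ hnm hδm (l2_nonneg w) (l2_nonneg g)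
    (div_nonneg (l2_nonneg F) hK.le) hε hε1 M1 M2 hP
  have hM : √‖lam - 1‖ + (ν / K) ^ ((1:ℝ)/4) ≤ 2 * m := by
    rw [hne, hm]
    have b0 := Real.sqrt_nonneg |1 - lamr|
    have b2 := Real.sq_sqrt (abs_nonneg (1 - lamr))
    have : ‖lam - 1‖ ≤ (√|1 - lamr| + e) ^ 2 := by
      have e1 : lam - 1 = ((lamr - 1 : ℝ) : ℂ) - Complex.I * ((ε * √(ν / K) : ℝ) : ℂ) := by
        rw [hlam]; push_cast; ring
      rw [e1]
      refine (norm_sub_le _ _).trans ?_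
      rw [norm_mul, Complex.norm_real, Complex.norm_real, Complex.norm_I, Real.norm_eq_abs,
        Real.norm_eq_abs, abs_of_nonneg (a := ε * √(ν / K)) (by positivity), abs_sub_comm, ← he2]
      have : ε * e ^ 2 ≤ 1 * e ^ 2 := by gcongr; linarith
      nlinarith
    have := (Real.sqrt_le_sqrt this).trans_eq (Real.sqrt_sq (by positivity))
    linarith
  obtain ⟨W1, W2⟩ := weight_le hν hK hm0 hδ hnm (by positivity) hM
  have T1 := mul_le_mul_of_nonneg_right W1 hkn
  have T2 := mul_le_mul_of_nonneg_right W2 (l2_nonneg w)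
  have U1 := mul_le_mul_of_nonneg_left N1 (by positivity : 0 ≤ 2 * K)
  have U2 := mul_le_mul_of_nonneg_left N2 (by positivity : 0 ≤ 2 * K)
  have hKG : 2 * K * (220000 * (l2 F / K)) = 440000 * l2 F := by field_simp; ring
  rw [hKG] at U1 U2
  linarith

end
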